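/- Let d ≥ 1 be an integer, let X ⊆ ℝ^d be a nonempty compact convex set with positive Lebesgue measure, and let m denote Lebesgue measure restricted to X. Let β > 0, λ > 0, L > 0 and δ₀ ∈ (0,1). Let F : ℝ^d → ℝ be a convex function and let ℓ : ℝ^d → ℝ be a convex function that is L-Lipschitz (with respect to the Euclidean norm). Let μ be the probability measure on X with density with respect to m proportional to exp(−β(F(x) + λ‖x‖²)), and let ν be the probability measure on X with density proportional to exp(−β(F(x) + ℓ(x) + λ‖x‖²)). Set η = 2βL²/λ + √(8βL² · log(2/δ₀) / λ). Then μ and ν are (η, δ₀)-indistinguishable, i.e., for every measurable S ⊆ X, μ(S) ≤ e^η · ν(S) + δ₀ and ν(S) ≤ e^η · μ(S) + δ₀. -/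

import Mathlib

open MeasureTheory

/-- One-dimensional Brunn-Minkowski inequality for compact sets (midpoint form). -/
lemma bm_compact (A B C : Set ℝ) (hA : IsCompact A) (hB : IsCompact B) (hAn : A.Nonempty)
    (hBn : B.Nonempty) (h : ∀ x ∈ A, ∀ y ∈ B, (1 / 2 : ℝ) * (x + y) ∈ C) :
    volume A + volume B ≤ 2 * volume C := by
  obtain ⟨a, ha, hamax⟩ := hA.exists_isGreatest hAn
  obtain ⟨b, hb, hbmin⟩ := hB.exists_isLeast hBn
  have hvol : ∀ (c : ℝ) (K : Set ℝ),
      volume K = 2 * volume ((fun z : ℝ => 2 * z) ⁻¹' ((fun z : ℝ => z - c) ⁻¹' K)) := by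
    intro c K
    rw [Real.volume_preimage_mul_left two_ne_zero]
    have : volume ((fun z : ℝ => z - c) ⁻¹' K) = volume K := by
      simp only [sub_eq_add_neg]
      exact measure_preimage_add_right volume (-c) K
    rw [this, ← mul_assoc]
    have : (2 : ENNReal) * ENNReal.ofReal |(2 : ℝ)⁻¹| = 1 := by
      rw [abs_of_pos (by norm_num), ← ENNReal.ofReal_ofNat, ← ENNReal.ofReal_mul (by norm_num)]
      norm_num
    rw [this, one_mul]
  rw [hvol b A, hvol a B, ← mul_add]
  gcongr
  set U := (fun z : ℝ => 2 * z) ⁻¹' ((fun z : ℝ => z - b) ⁻¹' A) with hU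
  set V := (fun z : ℝ => 2 * z) ⁻¹' ((fun z : ℝ => z - a) ⁻¹' B) with hV
  have hVm : MeasurableSet V := by
    apply (measurable_const_mul (2 : ℝ))
    exact (measurable_id.sub_const a) hB.measurableSet
  rw [← measure_union_add_inter U hVm]
  have hint : volume (U ∩ V) = 0 := by
    apply measure_mono_null (t := {(1 / 2 : ℝ) * (a + b)}) _ (by simp)
    rintro z ⟨hz1, hz2⟩
    have h1 := hamax hz1
    have h2 := hbmin hz2
    simp only [Set.mem_singleton_iff]
    linarith
  rw [hint, add_zero]
  apply measure_mono
  rintro z (hz | hz)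
  · have := h _ hz b hb
    convert this using 1
    ring
  · have := h a ha _ hz
    convert this using 1
    ring

lemma bm_measurable (A B C : Set ℝ) (hA : MeasurableSet A) (hB : MeasurableSet B)
    (hAn : A.Nonempty)
    (hBn : B.Nonempty) (h : ∀ x ∈ A, ∀ y ∈ B, (1 / 2 : ℝ) * (x + y) ∈ C) :
    volume A + volume B ≤ 2 * volume C := by
  have key : ∀ D : Set ℝ, MeasurableSet D → D.Nonempty →
      volume D ≤ ⨆ K : {K : Set ℝ // K ⊆ D ∧ IsCompact K ∧ K.Nonempty}, volume K.1 := by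
    rintro D hD ⟨a, ha⟩
    apply le_of_forall_lt
    intro r hr
    obtain ⟨K, hKA, hK, hrK⟩ := hD.exists_lt_isCompact hr
    apply lt_of_lt_of_le (hrK.trans_le (measure_mono (Set.subset_insert a K)))
    exact le_iSup (fun K : {K : Set ℝ // K ⊆ D ∧ IsCompact K ∧ K.Nonempty} => volume K.1)
      ⟨insert a K, Set.insert_subset ha hKA, hK.insert a, Set.insert_nonempty _ _⟩
  refine (add_le_add (key A hA hAn) (key B hB hBn)).trans ?_
  obtain ⟨a, ha⟩ := hAn
  obtain ⟨b, hb⟩ := hBn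
  have : Nonempty {K : Set ℝ // K ⊆ A ∧ IsCompact K ∧ K.Nonempty} :=
    ⟨⟨{a}, by simpa using ha, isCompact_singleton, Set.singleton_nonempty a⟩⟩
  have : Nonempty {K : Set ℝ // K ⊆ B ∧ IsCompact K ∧ K.Nonempty} :=
    ⟨⟨{b}, by simpa using hb, isCompact_singleton, Set.singleton_nonempty b⟩⟩
  apply ENNReal.iSup_add_iSup_le
  rintro ⟨K, hK1, hK2, hK3⟩ ⟨M, hM1, hM2, hM3⟩
  exact bm_compact _ _ _ hK2 hM2 hK3 hM3 fun x hx y hy => h x (hK1 hx) y (hM1 hy)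

/-- Real-valued normalized case of the one-dimensional inequality. -/
lemma pl_norm_real (f g h : ℝ → ℝ) (hf : Measurable f) (hg : Measurable g) (hh : Measurable h)
    (f0 : ∀ x, 0 ≤ f x) (g0 : ∀ x, 0 ≤ g x) (h0 : ∀ x, 0 ≤ h x)
    (f1 : ∀ x, f x ≤ 1) (g1 : ∀ x, g x ≤ 1)
    (fs : ∀ s < 1, ∃ x, s < f x) (gs : ∀ s < 1, ∃ x, s < g x)
    (H : ∀ x y, f x * g y ≤ h ((1 / 2 : ℝ) * (x + y)) ^ 2) :
    (∫⁻ x, ENNReal.ofReal (f x)) + (∫⁻ x, ENNReal.ofReal (g x))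
      ≤ 2 * ∫⁻ x, ENNReal.ofReal (h x) := by
  rw [lintegral_eq_lintegral_meas_lt _ (ae_of_all _ f0) hf.aemeasurable,
    lintegral_eq_lintegral_meas_lt _ (ae_of_all _ g0) hg.aemeasurable,
    lintegral_eq_lintegral_meas_lt _ (ae_of_all _ h0) hh.aemeasurable,
    ← lintegral_const_mul' _ _ (by simp), ← lintegral_add_left']
  · apply setLIntegral_mono' measurableSet_Ioi
    intro s hs
    have hs : 0 < s := hs
    rcases lt_or_ge s 1 with h1 | h1
    · apply bm_measurable _ _ _ (measurableSet_lt measurable_const hf)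
        (measurableSet_lt measurable_const hg) (fs s h1) (gs s h1)
      intro x hx y hy
      have hx : s < f x := hx
      have hy : s < g y := hy
      have := H x y
      show s < h _
      by_contra hc
      push Not at hc
      have h2 := h0 ((1 / 2 : ℝ) * (x + y))
      nlinarith
    · have e1 : {a | s < f a} = ∅ := by
        ext a; simp; exact (f1 a).trans h1
      have e2 : {a | s < g a} = ∅ := by
        ext a; simp; exact (g1 a).trans h1
      simp [e1, e2]
  · apply Antitone.measurable _ |>.aemeasurable
    intro s t hst
    apply measure_mono
    intro a ha
    exact lt_of_le_of_lt hst ha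

/-- ENNReal normalized case. -/
lemma pl_norm (f g h : ℝ → ENNReal) (hf : Measurable f) (hg : Measurable g) (hh : Measurable h)
    (fs : ⨆ x, f x = 1) (gs : ⨆ x, g x = 1)
    (H : ∀ x y, f x * g y ≤ h ((1 / 2 : ℝ) * (x + y)) ^ 2) :
    (∫⁻ x, f x) + (∫⁻ x, g x) ≤ 2 * ∫⁻ x, h x := by
  have f1 : ∀ x, f x ≤ 1 := fun x => fs ▸ le_iSup f x
  have g1 : ∀ x, g x ≤ 1 := fun x => gs ▸ le_iSup g x
  have key : ∀ u : ℝ → ENNReal, (∀ x, u x ≤ 1) → (⨆ x, u x = 1) →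
      ∀ s < (1 : ℝ), ∃ x, s < (u x).toReal := by
    intro u u1 us s hs
    have : ENNReal.ofReal s < ⨆ x, u x := by rw [us]; exact ENNReal.ofReal_lt_one.2 hs
    obtain ⟨x, hx⟩ := lt_iSup_iff.1 this
    have hne : u x ≠ ⊤ := ne_top_of_le_ne_top (by simp) (u1 x)
    refine ⟨x, ?_⟩
    by_contra hcon
    push Not at hcon
    exact absurd hx (not_lt.2 ((ENNReal.le_ofReal_iff_toReal_le hne
      (ENNReal.toReal_nonneg.trans hcon)).2 hcon))
  have h1 : ∀ x, min (h x) 1 ≠ ⊤ := fun x => ne_top_of_le_ne_top (by simp) (min_le_right _ _)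
  have := pl_norm_real (fun x => (f x).toReal) (fun x => (g x).toReal)
    (fun x => (min (h x) 1).toReal) hf.ennreal_toReal hg.ennreal_toReal
    (hh.min measurable_const).ennreal_toReal (fun _ => ENNReal.toReal_nonneg)
    (fun _ => ENNReal.toReal_nonneg) (fun _ => ENNReal.toReal_nonneg)
    (fun x => ENNReal.toReal_le_of_le_ofReal zero_le_one (by simpa using f1 x))
    (fun x => ENNReal.toReal_le_of_le_ofReal zero_le_one (by simpa using g1 x))
    (key f f1 fs) (key g g1 gs) (by
      intro x y
      rw [← ENNReal.toReal_mul, ← ENNReal.toReal_pow]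
      apply ENNReal.toReal_mono (ENNReal.pow_ne_top (h1 _))
      rcases le_total (h ((1 / 2 : ℝ) * (x + y))) 1 with hc | hc
      · rw [min_eq_left hc]; exact H x y
      · rw [min_eq_right hc, one_pow]; exact mul_le_one' (f1 x) (g1 y))
  simp only [ENNReal.ofReal_toReal (h1 _),
    ENNReal.ofReal_toReal (ne_top_of_le_ne_top ENNReal.one_ne_top (f1 _)),
    ENNReal.ofReal_toReal (ne_top_of_le_ne_top ENNReal.one_ne_top (g1 _))] at this
  refine this.trans ?_
  gcongr
  exact min_le_left _ _

lemma amgm_ennreal (a b c : ENNReal) (h : a + b ≤ 2 * c) : a * b ≤ c ^ 2 := by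
  rcases eq_or_ne c ⊤ with rfl | hc
  · simp
  have hab : a + b ≠ ⊤ := ne_top_of_le_ne_top (ENNReal.mul_ne_top (by simp) hc) h
  have ha : a ≠ ⊤ := fun h => hab (by simp [h])
  have hb : b ≠ ⊤ := fun h => hab (by simp [h])
  lift a to NNReal using ha
  lift b to NNReal using hb
  lift c to NNReal using hc
  norm_cast at *
  have h' : (a : ℝ) + b ≤ 2 * c := by exact_mod_cast h
  have : (a : ℝ) * b ≤ c ^ 2 := by nlinarith [sq_nonneg ((a : ℝ) - b), a.2, b.2, c.2]
  exact_mod_cast this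

/-- One-dimensional, bounded. -/
lemma pl_bdd (f g h : ℝ → ENNReal) (hf : Measurable f) (hg : Measurable g) (hh : Measurable h)
    (fs : ⨆ x, f x ≠ ⊤) (gs : ⨆ x, g x ≠ ⊤)
    (H : ∀ x y, f x * g y ≤ h ((1 / 2 : ℝ) * (x + y)) ^ 2) :
    (∫⁻ x, f x) * (∫⁻ x, g x) ≤ (∫⁻ x, h x) ^ 2 := by
  set a := ⨆ x, f x with ha
  set b := ⨆ x, g x with hb
  rcases eq_or_ne a 0 with h0 | ha0
  · have : ∀ x, f x = 0 := by simpa [h0] using ha.symm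
    simp [this]
  rcases eq_or_ne b 0 with h0 | hb0
  · have : ∀ x, g x = 0 := by simpa [h0] using hb.symm
    simp [this]
  obtain ⟨c, hc⟩ : ∃ c : ENNReal, c ^ 2 = a * b :=
    ⟨(a * b) ^ (1 / 2 : ℝ), by rw [← ENNReal.rpow_natCast, ← ENNReal.rpow_mul]; norm_num⟩
  have hab0 : a * b ≠ 0 := mul_ne_zero ha0 hb0
  have habt : a * b ≠ ⊤ := ENNReal.mul_ne_top fs gs
  have hc0 : c ≠ 0 := by rintro rfl; simp at hc; tauto
  have hct : c ≠ ⊤ := by rintro rfl; simp at hc; exact habt hc.symm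
  have := pl_norm (fun x => a⁻¹ * f x) (fun x => b⁻¹ * g x) (fun x => c⁻¹ * h x)
    (hf.const_mul _) (hg.const_mul _) (hh.const_mul _)
    (by rw [← ENNReal.mul_iSup, ← ha, ENNReal.inv_mul_cancel ha0 fs])
    (by rw [← ENNReal.mul_iSup, ← hb, ENNReal.inv_mul_cancel hb0 gs])
    (by
      intro x y
      rw [mul_pow, ← ENNReal.inv_pow, hc, ENNReal.mul_inv (Or.inl ha0) (Or.inl fs), mul_mul_mul_comm]
      gcongr
      exact H x y)
  have := amgm_ennreal _ _ _ this
  rw [lintegral_const_mul _ hf, lintegral_const_mul _ hg, lintegral_const_mul _ hh, mul_pow,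
    ← ENNReal.inv_pow, hc, mul_mul_mul_comm, ← ENNReal.mul_inv (Or.inl ha0) (Or.inl fs)] at this
  exact (ENNReal.mul_le_mul_iff_right (ENNReal.inv_ne_zero.2 habt) (ENNReal.inv_ne_top.2 hab0)).1 this

/-- Midpoint Prekopa-Leindler property of a measure. -/
def PLProp (E : Type*) [AddCommGroup E] [Module ℝ E] [MeasurableSpace E] (μ : Measure E) : Prop :=
  ∀ f g h : E → ENNReal, Measurable f → Measurable g → Measurable h →
    (∀ x y, f x * g y ≤ h ((1 / 2 : ℝ) • (x + y)) ^ 2) →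
    (∫⁻ x, f x ∂μ) * (∫⁻ x, g x ∂μ) ≤ (∫⁻ x, h x ∂μ) ^ 2

lemma pl_real : PLProp ℝ volume := by
  intro f g h hf hg hh H
  have key : ∀ u : ℝ → ENNReal, Measurable u →
      ∫⁻ x, u x = ⨆ n : ℕ, ∫⁻ x, min (u x) n := by
    intro u hu
    rw [← lintegral_iSup (fun n => hu.min measurable_const)]
    · congr 1; ext x
      rw [← inf_iSup_eq, ENNReal.iSup_natCast]; simp
    · intro m n hmn x
      exact min_le_min le_rfl (by exact_mod_cast hmn)
  rw [key f hf, key g hg]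
  rw [ENNReal.iSup_mul]
  refine iSup_le fun m => ?_
  rw [ENNReal.mul_iSup]
  refine iSup_le fun n => ?_
  apply pl_bdd _ _ _ (hf.min measurable_const) (hg.min measurable_const) hh
  · exact ne_top_of_le_ne_top (ENNReal.natCast_ne_top m) (iSup_le fun x => min_le_right _ _)
  · exact ne_top_of_le_ne_top (ENNReal.natCast_ne_top n) (iSup_le fun x => min_le_right _ _)
  · intro x y
    exact (mul_le_mul' (min_le_left _ _) (min_le_left _ _)).trans (H x y)

lemma PLProp.prod {E G : Type*} [AddCommGroup E] [Module ℝ E] [MeasurableSpace E]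
    [AddCommGroup G] [Module ℝ G] [MeasurableSpace G] {μ : Measure E} {ν : Measure G}
    [SFinite μ] [SFinite ν] (h1 : PLProp E μ) (h2 : PLProp G ν) : PLProp (E × G) (μ.prod ν) := by
  intro f g h hf hg hh H
  rw [lintegral_prod _ hf.aemeasurable, lintegral_prod _ hg.aemeasurable,
    lintegral_prod _ hh.aemeasurable]
  apply h1 _ _ _ hf.lintegral_prod_right' hg.lintegral_prod_right' hh.lintegral_prod_right'
  intro x y
  apply h2 _ _ _ (hf.comp measurable_prodMk_left) (hg.comp measurable_prodMk_left)
    (hh.comp measurable_prodMk_left)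
  intro u v
  exact H (x, u) (y, v)

lemma PLProp.transfer {E G : Type*} [AddCommGroup E] [Module ℝ E] [MeasurableSpace E]
    [AddCommGroup G] [Module ℝ G] [MeasurableSpace G] {μ : Measure E} {ν : Measure G}
    (e : E → G) (he : MeasurePreserving e μ ν) (h1 : PLProp E μ)
    (hmid : ∀ x y, e ((1 / 2 : ℝ) • (x + y)) = (1 / 2 : ℝ) • (e x + e y)) : PLProp G ν := by
  intro f g h hf hg hh H
  rw [← he.lintegral_comp hf, ← he.lintegral_comp hg, ← he.lintegral_comp hh]
  apply h1 _ _ _ (hf.comp he.measurable) (hg.comp he.measurable) (hh.comp he.measurable)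
  intro x y
  simp only [Function.comp, hmid]
  exact H _ _

lemma pl_pi : ∀ n : ℕ, PLProp (Fin n → ℝ) volume
  | 0 => by
    intro f g h hf hg hh H
    rw [Measure.volume_pi_eq_dirac 0]
    simp only [lintegral_dirac]
    simpa using H 0 0
  | n + 1 => by
    refine PLProp.transfer _
      (volume_preserving_piFinSuccAbove (fun _ : Fin (n + 1) => ℝ) 0).symm
      (PLProp.prod pl_real (pl_pi n)) ?_
    rintro ⟨a, x⟩ ⟨b, y⟩
    ext i
    refine Fin.cases ?_ (fun j => ?_) i
    · simp [MeasurableEquiv.piFinSuccAbove, Fin.insertNthEquiv]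
    · simp [MeasurableEquiv.piFinSuccAbove, Fin.insertNthEquiv]
      ring

lemma pl_euclidean (n : ℕ) : PLProp (EuclideanSpace ℝ (Fin n)) volume :=
  PLProp.transfer _ (PiLp.volume_preserving_toLp (Fin n)) (pl_pi n) (fun x y => by simp)

/-- Concentration via Prekopa-Leindler for strongly log-concave measures on a convex body. -/
lemma gibbs_exp {d : ℕ} (X : Set (EuclideanSpace ℝ (Fin d)))
    (hXc : IsCompact X) (hXconv : Convex ℝ X)
    (W φ : EuclideanSpace ℝ (Fin d) → ℝ) (hW : Continuous W) (hφ : Continuous φ)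
    (c M : ℝ) (hc : 0 < c)
    (hWc : ∀ x y, 2 * W ((1 / 2 : ℝ) • (x + y)) + c * ‖x - y‖ ^ 2 ≤ W x + W y)
    (hφM : ∀ x y, φ x - φ y ≤ M * ‖x - y‖) (t : ℝ) (ht : 0 ≤ t) :
    (∫ x in X, Real.exp (t * φ x - W x)) * (∫ x in X, Real.exp (-(t * φ x) - W x)) ≤
      Real.exp (t ^ 2 * M ^ 2 / (4 * c)) * (∫ x in X, Real.exp (-W x)) ^ 2 := by
  set D := t ^ 2 * M ^ 2 / (4 * c) with hD
  have hXm : MeasurableSet X := hXc.measurableSet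
  have conv : ∀ u : EuclideanSpace ℝ (Fin d) → ℝ, Continuous u →
      ∫⁻ x, X.indicator (fun x => ENNReal.ofReal (Real.exp (u x))) x
        = ENNReal.ofReal (∫ x in X, Real.exp (u x)) := by
    intro u hu
    rw [lintegral_indicator hXm, ofReal_integral_eq_lintegral_ofReal]
    · exact ((Real.continuous_exp.comp hu).continuousOn).integrableOn_compact hXc
    · exact ae_of_all _ fun x => (Real.exp_pos _).le
  have meas : ∀ u : EuclideanSpace ℝ (Fin d) → ℝ, Continuous u →
      Measurable (X.indicator (fun x => ENNReal.ofReal (Real.exp (u x)))) := by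
    intro u hu
    exact (Real.continuous_exp.comp hu).measurable.ennreal_ofReal.indicator hXm
  have c1 : Continuous fun x => t * φ x - W x := by fun_prop
  have c2 : Continuous fun x => -(t * φ x) - W x := by fun_prop
  have c3 : Continuous fun x => D / 2 - W x := by fun_prop
  have := pl_euclidean d _ _ _ (meas _ c1) (meas _ c2) (meas _ c3) (by
    intro x y
    by_cases hx : x ∈ X
    · by_cases hy : y ∈ X
      · have hz : (1 / 2 : ℝ) • (x + y) ∈ X := by
          rw [smul_add]
          exact hXconv hx hy (by norm_num) (by norm_num) (by norm_num)
        rw [Set.indicator_of_mem hx, Set.indicator_of_mem hy, Set.indicator_of_mem hz,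
          ← ENNReal.ofReal_mul (Real.exp_pos _).le, ← ENNReal.ofReal_pow (Real.exp_pos _).le,
          ← Real.exp_add, ← Real.exp_nat_mul]
        apply ENNReal.ofReal_le_ofReal
        apply Real.exp_le_exp.2
        have h1 := hWc x y
        have h2 := mul_le_mul_of_nonneg_left (hφM x y) ht
        have h3 : t * (M * ‖x - y‖) - c * ‖x - y‖ ^ 2 ≤ D := by
          rw [hD, le_div_iff₀ (by positivity)]
          nlinarith [sq_nonneg (t * M - 2 * c * ‖x - y‖)]
        push_cast
        linarith
      · simp [Set.indicator_of_notMem hy]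
    · simp [Set.indicator_of_notMem hx])
  rw [conv _ c1, conv _ c2, conv _ c3,
    ← ENNReal.ofReal_mul (integral_nonneg fun _ => (Real.exp_pos _).le),
    ← ENNReal.ofReal_pow (integral_nonneg fun _ => (Real.exp_pos _).le),
    ENNReal.ofReal_le_ofReal_iff (by positivity)] at this
  refine this.trans (le_of_eq ?_)
  have e : ∀ x, Real.exp (D / 2 - W x) = Real.exp (D / 2) * Real.exp (-W x) := by
    intro x; rw [← Real.exp_add]; ring_nf
  simp only [e]
  rw [integral_const_mul, mul_pow, ← Real.exp_nat_mul]
  congr 2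
  push_cast; ring

lemma bernoulli_exp (s t : ℝ) (ht : 1 ≤ t) : 1 + t * (Real.exp s - 1) ≤ Real.exp (t * s) := by
  have := one_add_mul_self_le_rpow_one_add (s := Real.exp s - 1)
    (by linarith [Real.exp_pos s]) ht
  rw [add_sub_cancel, ← Real.exp_mul] at this
  rwa [mul_comm t s]

lemma one_side {d : ℕ} (X : Set (EuclideanSpace ℝ (Fin d)))
    (hXc : IsCompact X) (hXconv : Convex ℝ X) (hXpos : 0 < volume X)
    (W φ : EuclideanSpace ℝ (Fin d) → ℝ) (hW : Continuous W) (hφ : Continuous φ)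
    (c M : ℝ) (hc : 0 < c)
    (hWc : ∀ x y, 2 * W ((1 / 2 : ℝ) • (x + y)) + c * ‖x - y‖ ^ 2 ≤ W x + W y)
    (hφM : ∀ x y, φ x - φ y ≤ M * ‖x - y‖) (t η δ : ℝ) (ht : 1 ≤ t)
    (hδ : Real.exp (t ^ 2 * M ^ 2 / (4 * c) - t * η) ≤ δ)
    (S : Set (EuclideanSpace ℝ (Fin d))) :
    (∫ x in S, Real.exp (-W x) ∂(volume.restrict X)) / (∫ x in X, Real.exp (-W x)) ≤
      Real.exp η * ((∫ x in S, Real.exp (-(W x + φ x)) ∂(volume.restrict X)) /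
        (∫ x in X, Real.exp (-(W x + φ x)))) + δ := by
  have hint : ∀ u : EuclideanSpace ℝ (Fin d) → ℝ, Continuous u →
      Integrable u (volume.restrict X) :=
    fun u hu => hu.continuousOn.integrableOn_compact hXc
  have hne : (volume.restrict X) ≠ 0 := by
    rw [Ne, Measure.restrict_eq_zero]; exact hXpos.ne'
  have : NeZero (volume.restrict X) := ⟨hne⟩
  have hpos : ∀ u : EuclideanSpace ℝ (Fin d) → ℝ, Continuous u →
      0 < ∫ x in X, Real.exp (u x) := by
    intro u hu
    exact integral_exp_pos (hint _ (Real.continuous_exp.comp hu))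
  have main := gibbs_exp X hXc hXconv W φ hW hφ c M hc hWc hφM t (by linarith)
  set D := t ^ 2 * M ^ 2 / (4 * c) with hD
  set P := ∫ x in X, Real.exp (-W x) with hP
  set Q := ∫ x in X, Real.exp (-(W x + φ x)) with hQ
  have P0 : 0 < P := hpos _ (by fun_prop)
  have Q0 : 0 < Q := hpos _ (by fun_prop)
  obtain ⟨k, hk⟩ : ∃ k, Real.exp k = Q / P := ⟨Real.log (Q / P), Real.exp_log (by positivity)⟩
  have hQk : Q = Real.exp k * P := by rw [hk]; field_simp
  -- lower bound on the negative exponential moment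
  have low : Real.exp (t * k) * P ≤ ∫ x in X, Real.exp (-(t * φ x) - W x) := by
    have h1 : ∫ x in X, (Real.exp (t * k) * ((1 - t) * Real.exp (-W x) +
        t * Real.exp (-k) * Real.exp (-(W x + φ x)))) = Real.exp (t * k) * P := by
      rw [integral_const_mul, integral_add ((hint _ (by fun_prop)).const_mul _)
        ((hint _ (by fun_prop)).const_mul _), integral_const_mul, integral_const_mul,
        ← hP, ← hQ, hQk]
      have : Real.exp (-k) * Real.exp k = 1 := by rw [← Real.exp_add]; simp
      linear_combination (Real.exp (t * k)) * t * P * this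
    rw [← h1]
    apply integral_mono (hint _ (by fun_prop)) (hint _ (by fun_prop))
    intro x
    have hb := bernoulli_exp (-φ x - k) t ht
    have e1 : Real.exp (-(t * φ x) - W x) =
        Real.exp (t * k) * Real.exp (-W x) * Real.exp (t * (-φ x - k)) := by
      rw [← Real.exp_add, ← Real.exp_add]; ring_nf
    have e2 : Real.exp (-k) * Real.exp (-(W x + φ x)) =
        Real.exp (-W x) * Real.exp (-φ x - k) := by
      rw [← Real.exp_add, ← Real.exp_add]; ring_nf
    have h3 : 0 < Real.exp (t * k) * Real.exp (-W x) := by positivity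
    have h4 := mul_le_mul_of_nonneg_left hb h3.le
    show _ ≤ Real.exp (-(t * φ x) - W x)
    rw [e1]
    refine le_trans (le_of_eq ?_) h4
    linear_combination (Real.exp (t * k)) * t * e2
  -- upper bound on the positive exponential moment
  have up : Real.exp (t * k) * (∫ x in X, Real.exp (t * φ x - W x)) ≤ Real.exp D * P := by
    have hI : 0 < ∫ x in X, Real.exp (t * φ x - W x) := hpos _ (by fun_prop)
    have := (mul_le_mul_of_nonneg_left low hI.le).trans main
    refine le_of_mul_le_mul_right ?_ P0
    linarith
  have pt : ∀ x, Real.exp (-W x) ≤ Real.exp (η - k) * Real.exp (-(W x + φ x)) +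
      Real.exp (t * k - t * η) * Real.exp (t * φ x - W x) := by
    intro x
    rw [← Real.exp_add, ← Real.exp_add]
    rcases le_total (φ x) (η - k) with h | h
    · have : Real.exp (-W x) ≤ Real.exp (η - k + -(W x + φ x)) :=
        Real.exp_le_exp.2 (by linarith)
      linarith [Real.exp_pos (t * k - t * η + (t * φ x - W x))]
    · have : Real.exp (-W x) ≤ Real.exp (t * k - t * η + (t * φ x - W x)) :=
        Real.exp_le_exp.2 (by nlinarith)
      linarith [Real.exp_pos (η - k + -(W x + φ x))]
  have hS : (∫ x in S, Real.exp (-W x) ∂(volume.restrict X)) ≤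
      Real.exp (η - k) * (∫ x in S, Real.exp (-(W x + φ x)) ∂(volume.restrict X)) +
      Real.exp (t * k - t * η) * (∫ x in S, Real.exp (t * φ x - W x) ∂(volume.restrict X)) := by
    rw [← integral_const_mul, ← integral_const_mul, ← integral_add]
    · apply integral_mono (hint _ (by fun_prop)).restrict
        (hint _ (by fun_prop)).restrict
      exact pt
    · exact (hint _ (by fun_prop)).restrict
    · exact (hint _ (by fun_prop)).restrict
  have hS2 : (∫ x in S, Real.exp (t * φ x - W x) ∂(volume.restrict X)) ≤
      ∫ x in X, Real.exp (t * φ x - W x) :=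
    setIntegral_le_integral (hint _ (by fun_prop)) (ae_of_all _ fun x => (Real.exp_pos _).le)
  have hfin : Real.exp (t * k - t * η) *
      (∫ x in S, Real.exp (t * φ x - W x) ∂(volume.restrict X)) ≤ δ * P := by
    calc _ ≤ Real.exp (t * k - t * η) * ∫ x in X, Real.exp (t * φ x - W x) := by gcongr
      _ = Real.exp (-(t * η)) * (Real.exp (t * k) * ∫ x in X, Real.exp (t * φ x - W x)) := by
        rw [← mul_assoc, ← Real.exp_add]; ring_nf
      _ ≤ Real.exp (-(t * η)) * (Real.exp D * P) := by gcongr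
      _ = Real.exp (D - t * η) * P := by rw [← mul_assoc, ← Real.exp_add]; ring_nf
      _ ≤ δ * P := by gcongr
  rw [div_le_iff₀ P0]
  refine hS.trans ?_
  rw [add_mul]
  refine add_le_add (le_of_eq ?_) hfin
  rw [hQk, Real.exp_sub]
  field_simp

lemma gibbs_apply {d : ℕ} (X : Set (EuclideanSpace ℝ (Fin d)))
    (hXc : IsCompact X) (hXpos : 0 < volume X)
    (W : EuclideanSpace ℝ (Fin d) → ℝ) (hW : Continuous W)
    (S : Set (EuclideanSpace ℝ (Fin d))) (hS : MeasurableSet S) :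
    ((((volume.restrict X).withDensity fun x => ENNReal.ofReal (Real.exp (-W x))) Set.univ)⁻¹ •
      ((volume.restrict X).withDensity fun x => ENNReal.ofReal (Real.exp (-W x)))) S =
    ENNReal.ofReal ((∫ x in S, Real.exp (-W x) ∂(volume.restrict X)) /
      (∫ x in X, Real.exp (-W x))) := by
  have hint : Integrable (fun x => Real.exp (-W x)) (volume.restrict X) :=
    (Continuous.continuousOn (by fun_prop)).integrableOn_compact hXc
  have : NeZero (volume.restrict X) := ⟨by
    rw [Ne, Measure.restrict_eq_zero]; exact hXpos.ne'⟩
  have hpos : 0 < ∫ x in X, Real.exp (-W x) := integral_exp_pos hint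
  rw [Measure.smul_apply, withDensity_apply _ MeasurableSet.univ, withDensity_apply _ hS,
    Measure.restrict_univ,
    ← ofReal_integral_eq_lintegral_ofReal hint (ae_of_all _ fun x => (Real.exp_pos _).le),
    ← ofReal_integral_eq_lintegral_ofReal hint.restrict
      (ae_of_all _ fun x => (Real.exp_pos _).le),
    ENNReal.ofReal_div_of_pos hpos, smul_eq_mul, ENNReal.div_eq_inv_mul]

lemma strong_mid {d : ℕ} (G : EuclideanSpace ℝ (Fin d) → ℝ) (hG : ConvexOn ℝ Set.univ G)
    (β lam : ℝ) (hβ : 0 < β) (x y : EuclideanSpace ℝ (Fin d)) :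
    2 * (β * (G ((1 / 2 : ℝ) • (x + y)) + lam * ‖(1 / 2 : ℝ) • (x + y)‖ ^ 2))
      + (β * lam / 2) * ‖x - y‖ ^ 2 ≤
      β * (G x + lam * ‖x‖ ^ 2) + β * (G y + lam * ‖y‖ ^ 2) := by
  have h1 := hG.2 (Set.mem_univ x) (Set.mem_univ y)
    (show (0 : ℝ) ≤ 1 / 2 by norm_num) (show (0 : ℝ) ≤ 1 / 2 by norm_num) (by norm_num)
  rw [← smul_add, smul_eq_mul, smul_eq_mul] at h1
  have h2 := parallelogram_law_with_norm ℝ x y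
  have h3 : ‖(1 / 2 : ℝ) • (x + y)‖ = 1 / 2 * ‖x + y‖ := by
    rw [norm_smul]; norm_num
  rw [h3]
  have h4 := mul_le_mul_of_nonneg_left h1 hβ.le
  linear_combination 2 * h4 + (β * lam / 2) * h2

lemma eta_bound (A δ₀ : ℝ) (hA : 0 < A) (h0 : 0 < δ₀) (h1 : δ₀ < 1) (η : ℝ)
    (hη : η = 2 * A + Real.sqrt (8 * A * Real.log (2 / δ₀))) :
    1 ≤ η / A ∧ Real.exp ((η / A) ^ 2 * A / 2 - (η / A) * η) ≤ δ₀ := by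
  set l := Real.log (2 / δ₀) with hl
  have hlog : Real.log δ₀ = Real.log 2 - l := by
    rw [hl, Real.log_div two_ne_zero h0.ne']; ring
  have l2 : 0 < Real.log 2 := Real.log_pos (by norm_num)
  have ld : Real.log δ₀ < 0 := Real.log_neg h0 h1
  have l0 : 0 < l := by linarith
  have hs := Real.sq_sqrt (show 0 ≤ 8 * A * l by positivity)
  have hs0 := Real.sqrt_nonneg (8 * A * l)
  set r := Real.sqrt (8 * A * l)
  constructor
  · rw [le_div_iff₀ hA]; linarith
  · rw [← Real.le_log_iff_exp_le h0]
    have e : (η / A) ^ 2 * A / 2 - (η / A) * η = -(η ^ 2 / (2 * A)) := by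
      field_simp; ring
    rw [e, hlog]
    have : 4 * l ≤ η ^ 2 / (2 * A) := by
      rw [le_div_iff₀ (by positivity), hη]
      nlinarith [mul_nonneg hA.le hs0]
    linarith

/-- One-step stability of the regularized multiplicative weights (Gibbs) measure:
on a nonempty compact convex `X ⊆ ℝ^d` of positive Lebesgue measure, the normalized
Gibbs measures with potentials `F(x) + λ‖x‖²` and `F(x) + ℓ(x) + λ‖x‖²` (inverse
temperature `β`, with `ℓ` convex and `L`-Lipschitz) are `(η, δ₀)`-indistinguishable
for `η = 2βL²/λ + √(8βL² log(2/δ₀)/λ)`. -/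
theorem rmw_stability (d : ℕ) (hd : 1 ≤ d) (X : Set (EuclideanSpace ℝ (Fin d)))
    (hXne : X.Nonempty) (hXcompact : IsCompact X) (hXconvex : Convex ℝ X)
    (hXpos : 0 < volume X)
    (β lam L δ₀ : ℝ) (hβ : 0 < β) (hlam : 0 < lam) (hL : 0 < L)
    (hδ₀ : δ₀ ∈ Set.Ioo (0 : ℝ) 1)
    (F ℓ : EuclideanSpace ℝ (Fin d) → ℝ)
    (hFconv : ConvexOn ℝ Set.univ F) (hℓconv : ConvexOn ℝ Set.univ ℓ)
    (hℓlip : LipschitzWith (Real.toNNReal L) ℓ) :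
    let m := volume.restrict X
    let μ' := m.withDensity fun x => ENNReal.ofReal (Real.exp (-β * (F x + lam * ‖x‖ ^ 2)))
    let ν' := m.withDensity fun x =>
      ENNReal.ofReal (Real.exp (-β * (F x + ℓ x + lam * ‖x‖ ^ 2)))
    let μ := (μ' Set.univ)⁻¹ • μ'
    let ν := (ν' Set.univ)⁻¹ • ν'
    let η := 2 * β * L ^ 2 / lam + Real.sqrt (8 * β * L ^ 2 * Real.log (2 / δ₀) / lam)
    ∀ S : Set (EuclideanSpace ℝ (Fin d)), MeasurableSet S →
      μ S ≤ ENNReal.ofReal (Real.exp η) * ν S + ENNReal.ofReal δ₀ ∧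
        ν S ≤ ENNReal.ofReal (Real.exp η) * μ S + ENNReal.ofReal δ₀ := by
  intro m μ' ν' μ ν η S hS
  have hF : Continuous F :=
    continuousOn_univ.1 (hFconv.continuousOn isOpen_univ)
  have hℓ : Continuous ℓ := hℓlip.continuous
  have hlip : ∀ x y, |ℓ x - ℓ y| ≤ L * ‖x - y‖ := by
    intro x y
    have := hℓlip.dist_le_mul x y
    rwa [Real.dist_eq, dist_eq_norm, Real.coe_toNNReal _ hL.le] at this
  have hA : 0 < β * L ^ 2 / lam := by positivity
  obtain ⟨ht, hδ⟩ := eta_bound (β * L ^ 2 / lam) δ₀ hA hδ₀.1 hδ₀.2 η (by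
    simp only [η]; congr 2 <;> ring)
  set t := η / (β * L ^ 2 / lam) with ht_def
  have hc : 0 < β * lam / 2 := by positivity
  have hδ' : Real.exp (t ^ 2 * (β * L) ^ 2 / (4 * (β * lam / 2)) - t * η) ≤ δ₀ := by
    refine le_trans (le_of_eq ?_) hδ
    congr 2
    field_simp
    ring
  set W₁ : EuclideanSpace ℝ (Fin d) → ℝ := fun x => β * (F x + lam * ‖x‖ ^ 2) with hW₁
  set W₂ : EuclideanSpace ℝ (Fin d) → ℝ := fun x => β * (F x + ℓ x + lam * ‖x‖ ^ 2) with hW₂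
  have cW₁ : Continuous W₁ := by fun_prop
  have cW₂ : Continuous W₂ := by fun_prop
  have hμ : μ S = ENNReal.ofReal ((∫ x in S, Real.exp (-W₁ x) ∂(volume.restrict X)) /
      (∫ x in X, Real.exp (-W₁ x))) := by
    rw [← gibbs_apply X hXcompact hXpos W₁ cW₁ S hS]
    simp only [μ, μ', m, W₁, neg_mul]
  have hν : ν S = ENNReal.ofReal ((∫ x in S, Real.exp (-W₂ x) ∂(volume.restrict X)) /
      (∫ x in X, Real.exp (-W₂ x))) := by
    rw [← gibbs_apply X hXcompact hXpos W₂ cW₂ S hS]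
    simp only [ν, ν', m, W₂, neg_mul]
  have h1 := one_side X hXcompact hXconvex hXpos W₁ (fun x => β * ℓ x) cW₁ (by fun_prop)
    (β * lam / 2) (β * L) hc (strong_mid F hFconv β lam hβ)
    (fun x y => by
      have := mul_le_mul_of_nonneg_left ((le_abs_self _).trans (hlip x y)) hβ.le
      linarith) t η δ₀ ht hδ' S
  have h2 := one_side X hXcompact hXconvex hXpos W₂ (fun x => -(β * ℓ x)) cW₂ (by fun_prop)
    (β * lam / 2) (β * L) hc (strong_mid (fun x => F x + ℓ x) (hFconv.add hℓconv) β lam hβ)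
    (fun x y => by
      have := mul_le_mul_of_nonneg_left ((neg_le_abs _).trans (hlip x y)) hβ.le
      linarith) t η δ₀ ht hδ' S
  have e1 : ∀ x, W₁ x + β * ℓ x = W₂ x := fun x => by simp only [W₁, W₂]; ring
  have e2 : ∀ x, W₂ x + -(β * ℓ x) = W₁ x := fun x => by simp only [W₁, W₂]; ring
  simp only [e1] at h1
  simp only [e2] at h2
  have nn : ∀ W : EuclideanSpace ℝ (Fin d) → ℝ,
      0 ≤ (∫ x in S, Real.exp (-W x) ∂(volume.restrict X)) / (∫ x in X, Real.exp (-W x)) :=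
    fun W => div_nonneg (integral_nonneg fun _ => (Real.exp_pos _).le)
      (integral_nonneg fun _ => (Real.exp_pos _).le)
  rw [hμ, hν]
  constructor
  · rw [← ENNReal.ofReal_mul (Real.exp_pos _).le,
      ← ENNReal.ofReal_add (mul_nonneg (Real.exp_pos _).le (nn W₂)) hδ₀.1.le]
    exact ENNReal.ofReal_le_ofReal h1
  · rw [← ENNReal.ofReal_mul (Real.exp_pos _).le,
      ← ENNReal.ofReal_add (mul_nonneg (Real.exp_pos _).le (nn W₁)) hδ₀.1.le]
    exact ENNReal.ofReal_le_ofReal h2
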